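/- arXiv:0805.4126 — 2 statements merged into one kernel-verified Lean document; each statement's English description precedes it below -/
import Mathlib

section
/- Let r ≥ 2 and 1 ≤ n₁ ≤ n₂ ≤ ⋯ ≤ n_r be integers, and let s ≥ 1 satisfy either (s ≤ n₁ + 3 and 1 < n₁ < n₂) or (s ≤ n₂ + 2 and (n₁ = 1 or n₁ = n₂)). For each j = 1,…,r let Q₁^{(j)},…,Q_s^{(j)} be points of ℙ^{n_j}(ℂ) in linearly general position. Then there exist s distinct points A₁,…,A_s ∈ ℙ¹ and, for each j, a morphism ψ_j : ℙ¹ → ℙ^{n_j} given by a basis of the degree-n_j homogeneous binary forms (so the image of ψ_j is a rational normal curve of degree n_j), such that ψ_j(Aᵢ) = Qᵢ^{(j)} for all i = 1,…,s and j = 1,…,r. In particular, the product map ψ₁ × ⋯ × ψ_r : ℙ¹ → ℙ^{n₁} × ⋯ × ℙ^{n_r} parametrizes a rational curve on the Segre product passing through the s points Pᵢ = Qᵢ^{(1)} × ⋯ × Qᵢ^{(r)} whose projection to the j-th factor has degree n_j. -/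
noncomputable section

/-- Projective space `ℙᵏ(ℂ)`, the projectivization of `ℂ^{k+1}`. -/
abbrev PP (k : ℕ) := Projectivization ℂ (Fin (k + 1) → ℂ)

/-- The vector of the monomials `s^k t^(n-k)`, used to parametrize rational normal curves. -/
def veron (n : ℕ) (v : Fin 2 → ℂ) : Fin (n + 1) → ℂ :=
  fun k => v 0 ^ (k : ℕ) * v 1 ^ (n - (k : ℕ))

/-- Points of `ℙᵏ` are in linearly general position if every subset of them of size at
most `k+1` has linearly independent representative vectors. -/
def InGenPos {k m : ℕ} (Q : Fin m → PP k) : Prop :=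
  ∀ S : Finset (Fin m), S.card ≤ k + 1 →
    LinearIndependent ℂ fun i : S => (Q i).rep

/-!
At most `n + 2` points of `ℙⁿ` in general position are projectively equivalent to the Veronese
images of *any* distinct parameters on `ℙ¹`, since both families extend to frames. So a single
factor, the one of smallest dimension, is left to choose the parameters.

If that factor is `ℙ¹`, its points are themselves the parameters. If it carries `n + 3` points `qₖ`
of `ℙⁿ`, the parameters come from Gale duality. The relations among the `qₖ` form a plane, and the
coordinate functionals on this plane give `n + 3` distinct points `Aₖ` of `ℙ¹`: up to fixed scalars
the relations are `k ↦ ℓ(Aₖ)` for linear forms `ℓ`. The degree `n + 1` Veronese images of the `Aₖ`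
satisfy a single relation `r`, with no zero entry. Since `ℓ` times a form of degree `n` has degree
`n + 1`, every `k ↦ rₖ ℓ(Aₖ)` is a relation among the degree `n` Veronese images. Up to rescaling
the members, these therefore satisfy the same relations as the `qₖ`, so the two families are
projectively equivalent.
-/

open Function Module
open scoped LinearAlgebra.Projectivization

section Relations

variable {K V κ : Type*} [Field K] [AddCommGroup V] [Module K V]

/-- A family of vectors is in linearly general position with respect to `d` if any `d` or fewer
of its members are linearly independent; `InGenPos` is the case of representatives of points of
`ℙ^(d-1)`. -/
def LinearGenPos (K : Type*) {V κ : Type*} [Field K] [AddCommGroup V] [Module K V]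
    (d : ℕ) (v : κ → V) : Prop :=
  ∀ S : Finset κ, S.card ≤ d → LinearIndepOn K v (S : Set κ)

lemma LinearGenPos.units_smul {d : ℕ} {v : κ → V} (hv : LinearGenPos K d v) (c : κ → Kˣ) :
    LinearGenPos K d (fun k => c k • v k) :=
  fun S hS => LinearIndependent.units_smul (hv S hS) (fun k => c k)

/-- Two families of nonzero vectors are projectively equivalent if a projective automorphism
carries the points of the first to the points of the second. -/
def ProjectivelyEquivalent (K : Type*) {V κ : Type*} [Field K] [AddCommGroup V] [Module K V]
    (v w : κ → V) : Prop :=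
  ∃ e : V ≃ₗ[K] V, ∃ c : κ → Kˣ, ∀ k, w k = c k • e (v k)

lemma ProjectivelyEquivalent.exists_isUnit_det {d : ℕ} {v w : κ → Fin d → K}
    (h : ProjectivelyEquivalent K v w) :
    ∃ M : Matrix (Fin d) (Fin d) K, IsUnit M.det ∧
      ∀ k, ∃ c : K, c ≠ 0 ∧ w k = c • M.mulVec (v k) := by
  obtain ⟨e, c, hc⟩ := h
  refine ⟨LinearMap.toMatrix' e.toLinearMap, ?_, fun k => ⟨c k, (c k).ne_zero, ?_⟩⟩
  · rw [LinearMap.det_toMatrix']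
    exact e.isUnit_det'
  · rw [LinearMap.toMatrix'_mulVec]
    exact hc k

lemma exists_matrix_range_mulVecLin_eq [Finite κ] {d : ℕ} (R : Submodule K (κ → K))
    (hR : finrank K R = d) :
    ∃ x : Matrix κ (Fin d) K, Injective x.mulVec ∧ LinearMap.range x.mulVecLin = R := by
  let f : (Fin d → K) →ₗ[K] κ → K := R.subtype ∘ₗ (finBasisOfFinrankEq K R hR).equivFun.symm
  have hf : (LinearMap.toMatrix' f).mulVecLin = f := Matrix.toLin'_toMatrix' f
  refine ⟨LinearMap.toMatrix' f, ?_, ?_⟩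
  · rw [← Matrix.coe_mulVecLin, hf]
    exact R.injective_subtype.comp (LinearEquiv.injective _)
  · rw [hf, LinearMap.range_comp, LinearEquiv.range, Submodule.map_top, R.range_subtype]

variable [Fintype κ]

/-- The space of linear relations `∑ gₖ vₖ = 0` among the members of a finite family. -/
def linearRelations (K : Type*) {V κ : Type*} [Field K] [AddCommGroup V] [Module K V] [Fintype κ]
    (v : κ → V) : Submodule K (κ → K) :=
  LinearMap.ker (Fintype.linearCombination K v)

lemma mem_linearRelations {v : κ → V} {g : κ → K} :
    g ∈ linearRelations K v ↔ ∑ k, g k • v k = 0 :=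
  Iff.rfl

lemma exists_linearEquiv_of_linearRelations_eq [FiniteDimensional K V] {v w : κ → V}
    (h : linearRelations K v = linearRelations K w) :
    ∃ e : V ≃ₗ[K] V, ∀ k, e (v k) = w k := by
  classical
  let F := Fintype.linearCombination K v
  let G := Fintype.linearCombination K w
  have hker : LinearMap.ker F = LinearMap.ker G := h
  obtain ⟨e, he⟩ := Submodule.exists_linearEquiv_restrict_eq
    (F.quotKerEquivRange.symm ≪≫ₗ Submodule.quotEquivOfEq _ _ hker ≪≫ₗ G.quotKerEquivRange)
  have he_comb : ∀ g, e (F g) = G g := fun g => by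
    rw [← F.quotKerEquivRange_apply_mk g, ← he]
    simp
  exact ⟨e, fun k => by simpa [F, G] using he_comb (Pi.single k 1)⟩

lemma ProjectivelyEquivalent.of_linearRelations_eq [FiniteDimensional K V] {v w : κ → V}
    {a b : κ → Kˣ}
    (h : linearRelations K (fun k => a k • v k) = linearRelations K (fun k => b k • w k)) :
    ProjectivelyEquivalent K v w := by
  obtain ⟨e, he⟩ := exists_linearEquiv_of_linearRelations_eq h
  refine ⟨e, fun k => (b k)⁻¹ * a k, fun k => ?_⟩
  rw [mul_smul, eq_inv_smul_iff, ← he k]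
  exact e.map_smul (a k : K) (v k)

namespace LinearGenPos

variable {d : ℕ} {v w : κ → V}

lemma eq_zero_of_mem_linearRelations (hv : LinearGenPos K d v) {g : κ → K}
    (hg : g ∈ linearRelations K v) {Z : Finset κ} (hZ : Fintype.card κ ≤ d + Z.card)
    (hgZ : ∀ k ∈ Z, g k = 0) : g = 0 := by
  classical
  have hindep := hv Zᶜ (by rw [Finset.card_compl]; omega)
  have hsum : ∑ k ∈ Zᶜ, g k • v k = 0 := by
    rw [← mem_linearRelations.1 hg]
    exact Finset.sum_subset (Finset.subset_univ _) fun k _ hk => by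
      rw [hgZ k (by simpa using hk), zero_smul]
  ext k
  by_cases hk : k ∈ Z
  · exact hgZ k hk
  · exact linearIndepOn_finset_iff.1 hindep g hsum k (by simpa using hk)

lemma linearRelations_eq_bot (hv : LinearGenPos K d v) (hκ : Fintype.card κ ≤ d) :
    linearRelations K v = ⊥ :=
  (Submodule.eq_bot_iff _).2 fun _ hg =>
    hv.eq_zero_of_mem_linearRelations hg (Z := ∅) (by simpa using hκ) (by simp)

variable [FiniteDimensional K V]

lemma span_range_eq_top (hd : finrank K V = d) (hv : LinearGenPos K d v)
    (hκ : d ≤ Fintype.card κ) : Submodule.span K (Set.range v) = ⊤ := by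
  obtain ⟨S, -, hS⟩ := Finset.exists_subset_card_eq (s := Finset.univ) hκ
  have hspan := (hv S hS.le).span_eq_top_of_card_eq_finrank' (by simp [hS, hd])
  refine top_le_iff.1 (hspan.symm.le.trans (Submodule.span_mono ?_))
  rintro _ ⟨k, rfl⟩
  exact ⟨k, rfl⟩

lemma finrank_linearRelations (hd : finrank K V = d) (hv : LinearGenPos K d v)
    (hκ : d ≤ Fintype.card κ) :
    d + finrank K (linearRelations K v) = Fintype.card κ := by
  have h := LinearMap.finrank_range_add_finrank_ker (Fintype.linearCombination K v)
  rwa [Fintype.range_linearCombination, span_range_eq_top hd hv hκ, finrank_top, hd,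
    finrank_fintype_fun_eq_card] at h

lemma linearRelations_eq_of_le (hd : finrank K V = d) (hv : LinearGenPos K d v)
    (hw : LinearGenPos K d w) (hκ : d ≤ Fintype.card κ)
    (h : linearRelations K v ≤ linearRelations K w) :
    linearRelations K v = linearRelations K w :=
  Submodule.eq_of_le_of_finrank_eq h <| add_left_cancel <|
    (finrank_linearRelations hd hv hκ).trans (finrank_linearRelations hd hw hκ).symm

lemma exists_units_mem_linearRelations_iff (hd : finrank K V = d)
    (hv : LinearGenPos K d v) (hκ : Fintype.card κ = d + 1) :
    ∃ r : κ → Kˣ, ∀ g, g ∈ linearRelations K v ↔ ∃ t : K, ∀ k, g k = t * r k := by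
  have hrank : finrank K (linearRelations K v) = 1 := by
    have := finrank_linearRelations hd hv (by omega)
    omega
  obtain ⟨⟨r, hr⟩, hr0, hspan⟩ := finrank_eq_one_iff'.1 hrank
  have hr_ne : ∀ k, r k ≠ 0 := fun k hk => hr0 <| Subtype.ext <|
    hv.eq_zero_of_mem_linearRelations hr (Z := {k}) (by simp [hκ]) (by simpa using hk)
  refine ⟨fun k => Units.mk0 (r k) (hr_ne k), fun g => ⟨fun hg => ?_, ?_⟩⟩
  · obtain ⟨t, ht⟩ := hspan ⟨g, hg⟩
    exact ⟨t, fun k => (congrFun (congrArg Subtype.val ht) k).symm⟩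
  · rintro ⟨t, ht⟩
    have hg : g = t • r := funext ht
    exact hg ▸ Submodule.smul_mem _ t hr

theorem projectivelyEquivalent (hd : finrank K V = d) (hv : LinearGenPos K d v)
    (hw : LinearGenPos K d w) (hκ : Fintype.card κ ≤ d + 1) :
    ProjectivelyEquivalent K v w := by
  rcases Nat.le_or_eq_of_le_succ hκ with hκ | hκ
  · refine .of_linearRelations_eq (a := 1) (b := 1) ?_
    simp [hv.linearRelations_eq_bot hκ, hw.linearRelations_eq_bot hκ]
  · obtain ⟨a, ha⟩ := exists_units_mem_linearRelations_iff hd hv hκ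
    obtain ⟨b, hb⟩ := exists_units_mem_linearRelations_iff hd hw hκ
    have rescaled {u : κ → V} {r : κ → Kˣ}
        (hr : ∀ g, g ∈ linearRelations K u ↔ ∃ t : K, ∀ k, g k = t * r k) (g : κ → K) :
        g ∈ linearRelations K (fun k => r k • u k) ↔ ∃ t : K, ∀ k, g k = t := by
      simpa [mem_linearRelations, Units.smul_def, smul_smul] using hr (fun k => g k * r k)
    exact .of_linearRelations_eq <| Submodule.ext fun g =>
      (rescaled ha g).trans (rescaled hb g).symm

end LinearGenPos

/-- The rows of `x` form the Gale dual of `v`. -/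
lemma LinearGenPos.linearIndependent_gale {d m : ℕ} {v : κ → V} (hv : LinearGenPos K d v)
    (hκ : Fintype.card κ = d + m) {x : Matrix κ (Fin m) K} (hx : Injective x.mulVec)
    (hxv : LinearMap.range x.mulVecLin = linearRelations K v) (f : Fin m ↪ κ) :
    LinearIndependent K (x.row ∘ f) := by
  suffices Injective (x.submatrix f id).mulVec from
    Matrix.linearIndependent_rows_iff_isUnit.2 (Matrix.mulVec_injective_iff_isUnit.1 this)
  refine (injective_iff_map_eq_zero (x.submatrix f id).mulVecLin).2 fun l hl => hx ?_
  rw [Matrix.mulVec_zero]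
  refine hv.eq_zero_of_mem_linearRelations (hxv ▸ ⟨l, rfl⟩) (Z := Finset.univ.map f)
    (by simp [hκ]) ?_
  rintro _ hk
  obtain ⟨i, -, rfl⟩ := Finset.mem_map.1 hk
  exact congrFun hl i

lemma LinearGenPos.exists_projectiveLine_linearRelations [FiniteDimensional K V] {v : κ → V}
    {d : ℕ} (hd : finrank K V = d) (hv : LinearGenPos K d v) (hκ : Fintype.card κ = d + 2) :
    ∃ A : κ → ℙ K (Fin 2 → K), Injective A ∧ ∃ c : κ → Kˣ, ∀ g ∈ linearRelations K v,
      ∃ l : Fin 2 → K, ∀ k, g k = c k * ((A k).rep ⬝ᵥ l) := by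
  have hrank : finrank K (linearRelations K v) = 2 := by
    have := LinearGenPos.finrank_linearRelations hd hv (by omega)
    omega
  obtain ⟨x, hx, hxv⟩ := exists_matrix_range_mulVecLin_eq _ hrank
  have hindep {j k : κ} (hjk : j ≠ k) : LinearIndependent K ![x j, x k] := by
    convert hv.linearIndependent_gale hκ hx hxv ⟨![j, k], injective_pair_iff_ne.2 hjk⟩ using 1
    ext i : 1
    fin_cases i <;> rfl
  have hx0 (k : κ) : x k ≠ 0 := by
    have : Nontrivial κ := Fintype.one_lt_card_iff_nontrivial.1 (by omega)
    obtain ⟨j, hj⟩ := exists_ne k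
    exact (hindep hj.symm).ne_zero 0
  choose u hu using fun k => Projectivization.exists_smul_eq_mk_rep K (x k) (hx0 k)
  refine ⟨fun k => .mk K (x k) (hx0 k), fun j k hjk => ?_, fun k => (u k)⁻¹, ?_⟩
  · contrapose! hjk
    rw [← Projectivization.independent_pair_iff_ne,
      Projectivization.independent_mk_iff_LinearIndependent]
    exact hindep hjk
  · rintro g hg
    obtain ⟨l, rfl⟩ := hxv.symm.le hg
    refine ⟨l, fun k => ?_⟩
    rw [← hu k, smul_dotProduct, Units.smul_def, smul_eq_mul, Units.inv_mul_cancel_left]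
    rfl

end Relations

section Veronese

variable {K : Type*} [Field K]

/-- The vector of all monomials of degree `n` in two variables over any field; `veron` is the
case of `ℂ`. -/
def veronese (n : ℕ) (v : Fin 2 → K) : Fin (n + 1) → K :=
  fun k => v 0 ^ (k : ℕ) * v 1 ^ (n - (k : ℕ))

lemma veronese_ne_zero (n : ℕ) {v : Fin 2 → K} (hv : v ≠ 0) : veronese n v ≠ 0 := by
  contrapose! hv
  ext k
  fin_cases k
  · exact eq_zero_of_pow_eq_zero (by simpa [veronese] using congrFun hv (Fin.last n))
  · exact eq_zero_of_pow_eq_zero (by simpa [veronese] using congrFun hv 0)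

lemma exists_linearMap_veronese_succ (n : ℕ) (l : Fin 2 → K) :
    ∃ φ : (Fin (n + 2) → K) →ₗ[K] Fin (n + 1) → K,
      ∀ v, φ (veronese (n + 1) v) = (v ⬝ᵥ l) • veronese n v := by
  refine ⟨l 0 • LinearMap.funLeft K K Fin.succ + l 1 • LinearMap.funLeft K K Fin.castSucc,
    fun v => funext fun k => ?_⟩
  have hk : n + 1 - (k : ℕ) = n - k + 1 := by omega
  calc l 0 * (v 0 ^ (k + 1 : ℕ) * v 1 ^ (n + 1 - (k + 1 : ℕ)))
        + l 1 * (v 0 ^ (k : ℕ) * v 1 ^ (n + 1 - (k : ℕ)))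
      = (v 0 * l 0 + v 1 * l 1) * (v 0 ^ (k : ℕ) * v 1 ^ (n - (k : ℕ))) := by
        rw [hk, Nat.add_sub_add_right]
        ring
    _ = ((v ⬝ᵥ l) • veronese n v) k := by simp [veronese, dotProduct, Fin.sum_univ_two]

lemma sum_smul_veronese_eq_zero_of_succ {n : ℕ} {κ : Type*} {S : Finset κ} {x : κ → Fin 2 → K}
    {g : κ → K} (hg : ∑ k ∈ S, g k • veronese (n + 1) (x k) = 0) (l : Fin 2 → K) :
    ∑ k ∈ S, (g k * (x k ⬝ᵥ l)) • veronese n (x k) = 0 := by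
  obtain ⟨φ, hφ⟩ := exists_linearMap_veronese_succ n l
  simpa [hφ, smul_smul] using congrArg φ hg

lemma exists_dotProduct_rep_eq_zero_ne_zero {A B : ℙ K (Fin 2 → K)} (hAB : A ≠ B) :
    ∃ l : Fin 2 → K, A.rep ⬝ᵥ l = 0 ∧ B.rep ⬝ᵥ l ≠ 0 := by
  refine ⟨![A.rep 1, -A.rep 0], by simp [dotProduct, Fin.sum_univ_two, mul_comm], fun hB => ?_⟩
  have hcross : B.rep 0 * A.rep 1 = B.rep 1 * A.rep 0 := by
    simpa [dotProduct, Fin.sum_univ_two, add_neg_eq_zero] using hB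
  have hdep (k : Fin 2) : B.rep k • A.rep = A.rep k • B.rep := by
    ext i
    fin_cases k <;> fin_cases i <;> simp only [Pi.smul_apply, smul_eq_mul] <;> grind
  have hindep := Projectivization.linearIndependent_pair_iff_ne.2 hAB
  exact A.rep_nonzero (funext fun k => (hindep.eq_zero_of_pair' (hdep k)).2)

theorem linearGenPos_veronese (n : ℕ) {κ : Type*} {A : κ → ℙ K (Fin 2 → K)} (hA : Injective A) :
    LinearGenPos K (n + 1) (fun k => veronese n (A k).rep) := by
  classical
  intro S hS
  induction n generalizing S with
  | zero =>
    refine linearIndepOn_finset_iff.2 fun g hg i hi => ?_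
    obtain rfl := Finset.eq_singleton_iff_unique_mem.2
      ⟨hi, fun j hj => Finset.card_le_one.1 hS j hj i hi⟩
    simpa [veronese_ne_zero 0 (A i).rep_nonzero] using hg
  | succ n ih =>
    refine linearIndepOn_finset_iff.2 fun g hg i hi => ?_
    rcases Finset.eq_singleton_or_nontrivial hi with rfl | hS'
    · simpa [veronese_ne_zero (n + 1) (A i).rep_nonzero] using hg
    obtain ⟨j, hj, hji⟩ := hS'.exists_ne i
    obtain ⟨l, hjl, hil⟩ := exists_dotProduct_rep_eq_zero_ne_zero (hA.ne hji)
    have hsum := sum_smul_veronese_eq_zero_of_succ hg l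
    rw [← Finset.sum_erase S (a := j) (by simp [hjl])] at hsum
    have hgi := linearIndepOn_finset_iff.1
      (ih (S.erase j) (by rw [Finset.card_erase_of_mem hj]; omega)) _ hsum i
      (Finset.mem_erase.2 ⟨hji.symm, hi⟩)
    exact (mul_eq_zero.1 hgi).resolve_right hil

lemma projectivelyEquivalent_veronese_one {κ : Type*} (v : κ → Fin 2 → K) :
    ProjectivelyEquivalent K (fun k => veronese 1 (v k)) v := by
  refine ⟨LinearEquiv.funCongrLeft K K Fin.revPerm, 1, fun k => funext fun i => ?_⟩
  fin_cases i <;> simp [veronese, LinearEquiv.funCongrLeft, LinearMap.funLeft_apply]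

variable {κ : Type*} [Fintype κ]

theorem exists_projectivelyEquivalent_veronese_of_card_eq {n : ℕ} {q : κ → Fin (n + 1) → K}
    (hq : LinearGenPos K (n + 1) q) (hκ : Fintype.card κ = n + 3) :
    ∃ A : κ → ℙ K (Fin 2 → K), Injective A ∧
      ProjectivelyEquivalent K (fun k => veronese n (A k).rep) q := by
  obtain ⟨A, hA, c, hc⟩ :=
    LinearGenPos.exists_projectiveLine_linearRelations (finrank_fin_fun K) hq hκ
  obtain ⟨r, hr⟩ := LinearGenPos.exists_units_mem_linearRelations_iff
    (finrank_fin_fun K) (linearGenPos_veronese (n + 1) hA) hκ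
  have hr_rel : ∑ k, (r k : K) • veronese (n + 1) (A k).rep = 0 := (hr _).2 ⟨1, by simp⟩
  have hle : linearRelations K q ≤
      linearRelations K (fun k => ((c k)⁻¹ * r k) • veronese n (A k).rep) := by
    intro g hg
    obtain ⟨l, hl⟩ := hc g hg
    rw [mem_linearRelations, ← sum_smul_veronese_eq_zero_of_succ hr_rel l]
    refine Finset.sum_congr rfl fun k _ => ?_
    rw [Units.smul_def, smul_smul, hl]
    congr 1
    push_cast
    field_simp
  have heq := LinearGenPos.linearRelations_eq_of_le (finrank_fin_fun K) hq
    ((linearGenPos_veronese n hA).units_smul _) (by omega) hle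
  exact ⟨A, hA, .of_linearRelations_eq (b := 1) (by simpa using heq.symm)⟩

theorem projectivelyEquivalent_veronese_of_card_le {n : ℕ} {A : κ → ℙ K (Fin 2 → K)}
    (hA : Injective A) {q : κ → Fin (n + 1) → K} (hq : LinearGenPos K (n + 1) q)
    (hκ : Fintype.card κ ≤ n + 2) :
    ProjectivelyEquivalent K (fun k => veronese n (A k).rep) q :=
  LinearGenPos.projectivelyEquivalent (finrank_fin_fun K) (linearGenPos_veronese n hA) hq hκ

lemma infinite_projectiveLine [Infinite K] : Infinite (ℙ K (Fin 2 → K)) := by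
  classical
  exact (OnePoint.equivProjectivization K).infinite_iff.1 inferInstance

theorem exists_projectivelyEquivalent_veronese [Infinite K] {n : ℕ}
    {Q : κ → ℙ K (Fin (n + 1) → K)} (hQ : LinearGenPos K (n + 1) (fun k => (Q k).rep))
    (hκ : Fintype.card κ ≤ n + 3 ∨ n = 1) :
    ∃ A : κ → ℙ K (Fin 2 → K), Injective A ∧
      ProjectivelyEquivalent K (fun k => veronese n (A k).rep) (fun k => (Q k).rep) := by
  rcases hκ with hκ | rfl
  · rcases Nat.le_or_eq_of_le_succ hκ with hκ | hκ
    · have := infinite_projectiveLine (K := K)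
      obtain ⟨f⟩ := nonempty_embedding_nat κ
      let A : κ ↪ ℙ K (Fin 2 → K) := f.trans (Infinite.natEmbedding _)
      exact ⟨A, A.injective, projectivelyEquivalent_veronese_of_card_le A.injective hQ hκ⟩
    · exact exists_projectivelyEquivalent_veronese_of_card_eq hQ hκ
  · classical
    refine ⟨Q, fun i j hij => ?_, projectivelyEquivalent_veronese_one _⟩
    exact (hQ {i, j} Finset.card_le_two).injOn (by simp) (by simp) (congrArg _ hij)

end Veronese

theorem curve_on_segre_through_points_general {K ι κ : Type*} [Field K] [Infinite K] [Fintype κ]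
    {n : ι → ℕ} {j₀ : ι} (hj₀ : Fintype.card κ ≤ n j₀ + 3 ∨ n j₀ = 1)
    (hn : ∀ j ≠ j₀, Fintype.card κ ≤ n j + 2) {Q : (j : ι) → κ → ℙ K (Fin (n j + 1) → K)}
    (hQ : ∀ j, LinearGenPos K (n j + 1) (fun i => (Q j i).rep)) :
    ∃ A : κ → ℙ K (Fin 2 → K), Injective A ∧
      ∃ M : (j : ι) → Matrix (Fin (n j + 1)) (Fin (n j + 1)) K,
        ∀ j, IsUnit (M j).det ∧
          ∀ i, ∃ c : K, c ≠ 0 ∧ (Q j i).rep = c • (M j).mulVec (veronese (n j) (A i).rep) := by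
  obtain ⟨A, hA, hA₀⟩ := exists_projectivelyEquivalent_veronese (hQ j₀) hj₀
  have hequiv (j : ι) : ProjectivelyEquivalent K
      (fun i => veronese (n j) (A i).rep) (fun i => (Q j i).rep) := by
    by_cases hj : j = j₀
    · exact hj ▸ hA₀
    · exact projectivelyEquivalent_veronese_of_card_le hA (hQ j) (hn j hj)
  choose M hM using fun j => (hequiv j).exists_isUnit_det
  exact ⟨A, hA, M, hM⟩

/-- Curves on a Segre product through generic points: given points `Qᵢ^{(j)}` of
`ℙ^{n_j}` in linearly general position (`1 ≤ i ≤ s`, `1 ≤ j ≤ r`), under the numerical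
hypotheses there are `s` distinct parameters `Aᵢ ∈ ℙ¹` and, for each `j`, a morphism
`ψⱼ : ℙ¹ → ℙ^{n_j}` given by a basis of the degree-`n_j` binary forms (encoded by an
invertible coefficient matrix `Mⱼ`, so its image is a rational normal curve of degree
`n_j`) such that `ψⱼ(Aᵢ) = Qᵢ^{(j)}` for all `i, j`.  Hence the product map
`ψ₁ × ⋯ × ψ_r` parametrizes a rational curve on `ℙ^{n₁} × ⋯ × ℙ^{n_r}` through the `s`
points whose projection to the `j`-th factor has degree `n_j`. -/
theorem curve_on_segre_through_points
    (r : ℕ) (hr : 2 ≤ r) (nv : Fin r → ℕ) (hnv : ∀ j, 1 ≤ nv j) (hmono : Monotone nv)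
    (s : ℕ) (hs : 1 ≤ s)
    (hcond :
      (s ≤ nv ⟨0, by omega⟩ + 3 ∧ 1 < nv ⟨0, by omega⟩ ∧ nv ⟨0, by omega⟩ < nv ⟨1, by omega⟩) ∨
      (s ≤ nv ⟨1, by omega⟩ + 2 ∧ (nv ⟨0, by omega⟩ = 1 ∨ nv ⟨0, by omega⟩ = nv ⟨1, by omega⟩)))
    (Q : (j : Fin r) → Fin s → PP (nv j))
    (hQ : ∀ j, InGenPos (Q j)) :
    ∃ A : Fin s → PP 1, Function.Injective A ∧
      ∃ M : (j : Fin r) → Matrix (Fin (nv j + 1)) (Fin (nv j + 1)) ℂ,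
        ∀ j, IsUnit (M j).det ∧
          ∀ i, ∃ c : ℂ, c ≠ 0 ∧ (Q j i).rep = c • (M j).mulVec (veron (nv j) (A i).rep) := by
  have hle (j : Fin r) (hj : j ≠ ⟨0, by omega⟩) : nv ⟨1, by omega⟩ ≤ nv j :=
    hmono (Fin.mk_le_of_le_val (Nat.pos_of_ne_zero fun h => hj (Fin.ext h)))
  refine curve_on_segre_through_points_general (j₀ := ⟨0, by omega⟩) ?_ (fun j hj => ?_) hQ
  · rw [Fintype.card_fin]
    omega
  · have := hle j hj
    rw [Fintype.card_fin]
    omega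

end
end

section
/- For every n ≥ 3, the set of feasible weight vectors in ℙⁿ is finite. That is, there are only finitely many tuples L = (l₀,…,l_{n−2}) of non-negative integers such that a generic configuration of linear subspaces of weight L in ℙⁿ(ℂ) is maximally intersected by some rational normal curve. -/
noncomputable section

/-- `C ⊆ ℙⁿ` is a rational normal curve if it is the image of `[s:t] ↦ [F₀(s,t):⋯:Fₙ(s,t)]`
for a basis `F₀,…,Fₙ` of the degree-`n` binary forms; such a basis is encoded by an
invertible matrix of coefficients applied to the monomial vector `veron`. -/
def IsRNC (n : ℕ) (C : Set (PP n)) : Prop :=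
  ∃ M : Matrix (Fin (n + 1)) (Fin (n + 1)) ℂ, IsUnit M.det ∧
    C = {P : PP n | ∃ v : Fin 2 → ℂ, v ≠ 0 ∧ ∃ c : ℂ, c ≠ 0 ∧
      P.rep = c • M.mulVec (veron n v)}

/-- The linear subspace of `ℙⁿ` given as the projectivization of the column span of a matrix. -/
def projSet {n m : ℕ} (A : Matrix (Fin (n + 1)) (Fin m) ℂ) : Set (PP n) :=
  {P : PP n | P.rep ∈ Submodule.span ℂ (Set.range fun j => fun r => A r j)}

/-- A configuration of weight `L = (l₀,…,l_{n-2})`: for each `i`, `lᵢ` matrices of size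
`(n+1) × (i+1)`, whose column spans give the `i`-dimensional components. -/
abbrev Config (n : ℕ) (L : Fin (n - 1) → ℕ) :=
  (i : Fin (n - 1)) → Fin (L i) → Matrix (Fin (n + 1)) (Fin (i.1 + 1)) ℂ

/-- All matrices of the configuration have full rank. -/
def FullRank {n : ℕ} {L : Fin (n - 1) → ℕ} (A : Config n L) : Prop :=
  ∀ i j, (A i j).rank = i.1 + 1

/-- A curve `C` maximally intersects the configuration `A`: it meets every `i`-dimensional
component in exactly `i+1` distinct points. -/
def MaxIntersects {n : ℕ} {L : Fin (n - 1) → ℕ} (C : Set (PP n)) (A : Config n L) : Prop :=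
  ∀ i j, (C ∩ projSet (A i j)).ncard = i.1 + 1

/-- A property `Q` holds for a generic configuration of weight `L`: there is a nonzero
polynomial in the matrix entries such that `Q` holds at every full-rank tuple of matrices
where the polynomial does not vanish. -/
def GenHolds (n : ℕ) (L : Fin (n - 1) → ℕ) (Q : Config n L → Prop) : Prop :=
  ∃ F : MvPolynomial ((i : Fin (n - 1)) × (Fin (L i) × Fin (n + 1) × Fin (i.1 + 1))) ℂ,
    F ≠ 0 ∧ ∀ A : Config n L, FullRank A →
      MvPolynomial.eval (fun p => A p.1 p.2.1 p.2.2.1 p.2.2.2) F ≠ 0 → Q A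

/-- `L` is feasible: a generic configuration of weight `L` is maximally intersected
by some rational normal curve. -/
def Feasible (n : ℕ) (L : Fin (n - 1) → ℕ) : Prop :=
  GenHolds n L fun A => ∃ C : Set (PP n), IsRNC n C ∧ MaxIntersects C A

/-- `L` is non-feasible: for a generic configuration of weight `L`, no rational normal
curve maximally intersects it. -/
def NonFeasible (n : ℕ) (L : Fin (n - 1) → ℕ) : Prop :=
  GenHolds n L fun A => ¬ ∃ C : Set (PP n), IsRNC n C ∧ MaxIntersects C A

/-!
The proof is a dimension count. If a rational normal curve meets an `i`-dimensional subspace in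
`i + 1` points, these points are linearly independent (Vandermonde) and hence span the subspace, so
a configuration maximally intersected by some curve is determined by the matrix of the curve, the
parameters of the intersection points and, for each component, a change of basis. This costs
`(n + 1)²` parameters for the curve and `(i + 1) + (i + 1)²` for each `i`-dimensional component,
which has `(n + 1) (i + 1)` matrix entries. As `i ≤ n - 2`, each component has at least one more
entry than parameters, so with too many components the entries of a maximally intersected
configuration satisfy a fixed polynomial relation, which a generic configuration does not.

A point `[s : t]` of `ℙ¹` may only cost one parameter, while the intersection points need not lie in
a fixed affine chart of `ℙ¹`. One further parameter `c`, common to all components, makes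
`t ↦ [t : 1 + c t]` a chart containing all of the finitely many intersection points.
-/

open Matrix

/-! ### Polynomial maps and genericity -/

lemma exists_ne_zero_forall_eval_eval_eq_zero {σ τ R : Type*} [CommRing R] [IsDomain R]
    [Fintype σ] [Fintype τ] (h : Fintype.card σ < Fintype.card τ) (φ : τ → MvPolynomial σ R) :
    ∃ P : MvPolynomial τ R, P ≠ 0 ∧
      ∀ x : σ → R, MvPolynomial.eval (fun i => MvPolynomial.eval x (φ i)) P = 0 := by
  have hdep : ¬ AlgebraicIndependent R φ := fun hφ => by
    have hle := hφ.lift_cardinalMk_le_trdeg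
    rw [MvPolynomial.trdeg_of_isDomain] at hle
    simp only [Cardinal.mk_fintype, Cardinal.lift_natCast, Nat.cast_le] at hle
    exact hle.not_gt h
  simp only [algebraicIndependent_iff, not_forall] at hdep
  obtain ⟨P, hP, hP0⟩ := hdep
  refine ⟨P, hP0, fun x => ?_⟩
  rw [← map_zero (MvPolynomial.eval x), ← hP, MvPolynomial.aeval_def, MvPolynomial.hom_eval₂,
    MvPolynomial.eval, MvPolynomial.coe_eval₂Hom]
  congr 1
  ext
  simp

lemma rank_eq_card_of_det_submatrix_ne_zero {ι κ R : Type*} [CommRing R] [IsDomain R]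
    [Fintype κ] [DecidableEq κ] {A : Matrix ι κ R} {e : κ → ι}
    (h : (A.submatrix e id).det ≠ 0) : A.rank = Fintype.card κ :=
  A.rank_le_card_width.antisymm <| (rank_of_det_ne_zero h).symm.le.trans (A.rank_submatrix_le e id)

/-- The index type of the matrix entries of a configuration of weight `L`, that is, of the
variables of the polynomials occurring in `GenHolds`. -/
abbrev EntryIndex (n : ℕ) (L : Fin (n - 1) → ℕ) :=
  (i : Fin (n - 1)) × (Fin (L i) × Fin (n + 1) × Fin (i.1 + 1))

variable {n : ℕ} {L : Fin (n - 1) → ℕ}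

/-- All matrix entries of a configuration, as a point of affine space at which the polynomials of
`GenHolds` are evaluated. -/
def Config.entries (A : Config n L) : EntryIndex n L → ℂ :=
  fun p => A p.1 p.2.1 p.2.2.1 p.2.2.2

lemma Config.entries_surjective : Function.Surjective (Config.entries (n := n) (L := L)) :=
  fun x => ⟨fun i j => of fun r k => x ⟨i, j, r, k⟩, rfl⟩

/-- The determinant of the first `i + 1` rows of the matrix of the `j`-th `i`-dimensional component,
as a polynomial in the entries of the configuration. -/
def topMinor (i : Fin (n - 1)) (j : Fin (L i)) : MvPolynomial (EntryIndex n L) ℂ :=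
  MvPolynomial.rename (fun p => ⟨i, j, p.1.castLE (by omega), p.2⟩)
    (mvPolynomialX (Fin (i.1 + 1)) (Fin (i.1 + 1)) ℂ).det

lemma topMinor_ne_zero (i : Fin (n - 1)) (j : Fin (L i)) : topMinor i j ≠ 0 := by
  refine (map_ne_zero_iff _ (MvPolynomial.rename_injective _ fun p q hpq => ?_)).2
    (det_mvPolynomialX_ne_zero _ ℂ)
  simpa [Prod.ext_iff] using hpq

lemma eval_topMinor (A : Config n L) (i : Fin (n - 1)) (j : Fin (L i)) :
    MvPolynomial.eval A.entries (topMinor i j) =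
      ((A i j).submatrix (Fin.castLE (by omega)) id).det := by
  rw [topMinor, MvPolynomial.eval_rename, eval_det_mvPolynomialX]
  rfl

lemma fullRank_of_eval_topMinor_ne_zero {A : Config n L}
    (h : ∀ i j, MvPolynomial.eval A.entries (topMinor i j) ≠ 0) : FullRank A := fun i j => by
  have hij := h i j
  rw [eval_topMinor] at hij
  simpa using rank_eq_card_of_det_submatrix_ne_zero hij

lemma GenHolds.exists_eval_ne_zero {Q : Config n L → Prop} (hQ : GenHolds n L Q)
    {P : MvPolynomial (EntryIndex n L) ℂ} (hP : P ≠ 0) :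
    ∃ A : Config n L, Q A ∧ MvPolynomial.eval A.entries P ≠ 0 := by
  obtain ⟨F, hF, hFQ⟩ := hQ
  have hD : ∏ i, ∏ j, topMinor (L := L) i j ≠ 0 :=
    Finset.prod_ne_zero_iff.2 fun i _ => Finset.prod_ne_zero_iff.2 fun j _ => topMinor_ne_zero i j
  obtain ⟨x, hx⟩ : ∃ x, MvPolynomial.eval x (F * P * ∏ i, ∏ j, topMinor i j) ≠ 0 := by
    by_contra! hzero
    exact mul_ne_zero (mul_ne_zero hF hP) hD (MvPolynomial.funext fun x => by simp [hzero x])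
  obtain ⟨A, rfl⟩ := Config.entries_surjective x
  simp only [map_mul, map_prod, mul_ne_zero_iff, Finset.prod_ne_zero_iff, Finset.mem_univ,
    forall_const] at hx
  obtain ⟨⟨hxF, hxP⟩, hxD⟩ := hx
  exact ⟨A, hFQ A (fullRank_of_eval_topMinor_ne_zero hxD) hxF, hxP⟩

lemma GenHolds.card_le_of_entries_mem_range {Q : Config n L → Prop} (hQ : GenHolds n L Q)
    {σ : Type*} [Fintype σ] (φ : EntryIndex n L → MvPolynomial σ ℂ)
    (hφ : ∀ A, Q A → ∃ x : σ → ℂ, A.entries = fun p => MvPolynomial.eval x (φ p)) :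
    Fintype.card (EntryIndex n L) ≤ Fintype.card σ := by
  by_contra! hlt
  obtain ⟨P, hP, hPφ⟩ := exists_ne_zero_forall_eval_eval_eq_zero hlt φ
  obtain ⟨A, hA, hPA⟩ := hQ.exists_eval_ne_zero hP
  obtain ⟨x, hx⟩ := hφ A hA
  exact hPA (hx ▸ hPφ x)

/-! ### Linear algebra -/

section RectVandermonde

variable {ι R : Type*} [CommRing R]

lemma rectVandermonde_map {S : Type*} [CommRing S] (f : R →+* S) (v w : ι → R) (k : ℕ) :
    (rectVandermonde v w k).map f = rectVandermonde (f ∘ v) (f ∘ w) k := by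
  ext
  simp [rectVandermonde_apply]

lemma rectVandermonde_succ (v w : ι → R) {k : ℕ} (i : ι) (j : Fin k) :
    rectVandermonde v w (k + 1) i j.succ = v i * rectVandermonde v w k i j := by
  simp only [rectVandermonde_apply, Fin.rev_succ, Fin.val_succ, Fin.val_castSucc]
  ring

lemma rectVandermonde_castSucc (v w : ι → R) {k : ℕ} (i : ι) (j : Fin k) :
    rectVandermonde v w (k + 1) i j.castSucc = w i * rectVandermonde v w k i j := by
  simp only [rectVandermonde_apply, Fin.rev_castSucc, Fin.val_succ, Fin.val_castSucc]
  ring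

variable [IsDomain R] {v w : ι → R}

lemma eq_zero_of_sum_mul_rectVandermonde_eq_zero (hne : ∀ i, v i ≠ 0 ∨ w i ≠ 0)
    (hvw : Pairwise fun i j => v i * w j ≠ v j * w i) {k : ℕ} {s : Finset ι} (hs : s.card ≤ k)
    {g : ι → R} (hg : ∀ j, ∑ i ∈ s, g i * rectVandermonde v w k i j = 0) :
    ∀ i ∈ s, g i = 0 := by
  classical
  induction k generalizing s g with
  | zero => simp [Finset.card_eq_zero.1 (Nat.le_zero.1 hs)]
  | succ k ih =>
    intro i hi
    by_cases hsub : ∃ j ∈ s, i ≠ j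
    · obtain ⟨j, hj, hij⟩ := hsub
      -- The combination `w j * (column l + 1) - v j * (column l)` eliminates the `j`-th row.
      have hrel (l : Fin k) : ∑ i ∈ s.erase j, g i * (v i * w j - v j * w i) *
          rectVandermonde v w k i l = 0 := by
        rw [Finset.sum_erase _ (by ring)]
        calc ∑ i ∈ s, g i * (v i * w j - v j * w i) * rectVandermonde v w k i l
            = w j * ∑ i ∈ s, g i * rectVandermonde v w (k + 1) i l.succ -
                v j * ∑ i ∈ s, g i * rectVandermonde v w (k + 1) i l.castSucc := by
              simp only [rectVandermonde_succ, rectVandermonde_castSucc, Finset.mul_sum,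
                ← Finset.sum_sub_distrib]
              exact Finset.sum_congr rfl fun i _ => by ring
          _ = 0 := by rw [hg, hg, mul_zero, mul_zero, sub_zero]
      have hcard : (s.erase j).card ≤ k := by
        rw [Finset.card_erase_of_mem hj]
        omega
      exact (mul_eq_zero.1 (ih hcard hrel i (Finset.mem_erase.2 ⟨hij, hi⟩))).resolve_right
        (sub_ne_zero.2 (hvw hij))
    · push Not at hsub
      obtain rfl : s = {i} := Finset.eq_singleton_iff_unique_mem.2
        ⟨hi, fun j hj => (hsub j hj).symm⟩
      have hfirst := hg 0
      have hlast := hg (Fin.last k)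
      simp only [Finset.sum_singleton, rectVandermonde_apply, mul_eq_zero, Fin.rev_zero,
        Fin.rev_last, Fin.val_zero, Fin.val_last, pow_zero, one_mul, mul_one] at hfirst hlast
      rcases hne i with hv | hw
      · exact hlast.resolve_right (pow_ne_zero k hv)
      · exact hfirst.resolve_right (pow_ne_zero k hw)

lemma linearIndependent_row_rectVandermonde [Fintype ι] (hne : ∀ i, v i ≠ 0 ∨ w i ≠ 0)
    (hvw : Pairwise fun i j => v i * w j ≠ v j * w i) {k : ℕ} (hk : Fintype.card ι ≤ k) :
    LinearIndependent R (rectVandermonde v w k).row := by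
  refine linearIndependent_iff'.2 fun s g hg =>
    eq_zero_of_sum_mul_rectVandermonde_eq_zero hne hvw (s.card_le_univ.trans hk) fun j => ?_
  simpa using congrFun hg j

end RectVandermonde

lemma exists_eq_mul_of_col_mem_span {ι κ K : Type*} [Field K] [Fintype κ] {A B : Matrix ι κ K}
    (hB : LinearIndependent K B.col)
    (hBA : ∀ k, B.col k ∈ Submodule.span K (Set.range A.col)) :
    ∃ G : Matrix κ κ K, A = B * G := by
  have := FiniteDimensional.span_of_finite K (Set.finite_range A.col)
  have hspan : Submodule.span K (Set.range B.col) = Submodule.span K (Set.range A.col) :=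
    Submodule.eq_of_le_of_finrank_le (Submodule.span_le.2 (Set.range_subset_iff.2 hBA)) <| by
      rw [finrank_span_eq_card hB]
      exact finrank_range_le_card _
  have hcol (k : κ) : ∃ g : κ → K, ∑ l, g l • B.col l = A.col k := by
    rw [← Submodule.mem_span_range_iff_exists_fun, hspan]
    exact Submodule.subset_span ⟨k, rfl⟩
  choose g hg using hcol
  refine ⟨of fun l k => g k l, ?_⟩
  ext r k
  simpa [mul_apply, mul_comm] using (congrFun (hg k) r).symm

lemma eq_of_rep_eq_smul {K V : Type*} [Field K] [AddCommGroup V] [Module K V]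
    {P Q : Projectivization K V} {a b : K} {x : V} (hP : P.rep = a • x) (hQ : Q.rep = b • x) :
    P = Q := by
  have hb : b ≠ 0 := by
    rintro rfl
    exact Q.rep_nonzero (by rw [hQ, zero_smul])
  rw [← P.mk_rep, ← Q.mk_rep, Projectivization.mk_eq_mk_iff']
  exact ⟨a / b, by rw [hP, hQ, smul_smul, div_mul_cancel₀ a hb]⟩

/-! ### Points on rational normal curves -/

lemma exists_forall_ne_mul {ι K : Type*} [Finite ι] [Field K] [Infinite K] {w : ι → Fin 2 → K}
    (hw : ∀ i, w i ≠ 0) : ∃ c : K, ∀ i, w i 1 ≠ c * w i 0 := by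
  obtain ⟨c, hc⟩ := (Set.finite_range fun i => w i 1 / w i 0).infinite_compl.nonempty
  refine ⟨c, fun i hi => ?_⟩
  by_cases h0 : w i 0 = 0
  · refine hw i (funext fun j => ?_)
    fin_cases j
    · exact h0
    · simpa [h0] using hi
  · exact hc ⟨i, (div_eq_iff h0).2 hi⟩

lemma veron_smul (a : ℂ) (v : Fin 2 → ℂ) : veron n (a • v) = a ^ n • veron n v := by
  ext k
  have hk : a ^ n = a ^ (k : ℕ) * a ^ (n - k) := by rw [← pow_add, Nat.add_sub_cancel' k.is_le]
  simp only [veron, Pi.smul_apply, smul_eq_mul, mul_pow, hk]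
  ring

lemma exists_veron_eq_smul {c : ℂ} {v : Fin 2 → ℂ} (hv : v 1 ≠ c * v 0) :
    ∃ a t : ℂ, veron n v = a • veron n ![t, 1 + c * t] := by
  have hd : v 1 - c * v 0 ≠ 0 := sub_ne_zero.2 hv
  refine ⟨(v 1 - c * v 0) ^ n, v 0 / (v 1 - c * v 0), ?_⟩
  rw [← veron_smul]
  congr 1
  have hfst : (v 1 - c * v 0) * (v 0 / (v 1 - c * v 0)) = v 0 := mul_div_cancel₀ _ hd
  ext j
  fin_cases j
  · exact hfst.symm
  · change v 1 = (v 1 - c * v 0) * (1 + c * (v 0 / (v 1 - c * v 0)))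
    linear_combination -c * hfst

lemma row_rectVandermonde {ι : Type*} (v w : ι → ℂ) (i : ι) :
    (rectVandermonde v w (n + 1)).row i = veron n ![v i, w i] := by
  ext k
  simp [rectVandermonde_apply, veron, Fin.val_rev]

/-- The rational normal curve whose parametrizing binary forms have coefficient matrix `M`. -/
def rationalNormalCurve (M : Matrix (Fin (n + 1)) (Fin (n + 1)) ℂ) : Set (PP n) :=
  {P | ∃ v : Fin 2 → ℂ, v ≠ 0 ∧ ∃ c : ℂ, c ≠ 0 ∧ P.rep = c • M *ᵥ veron n v}

lemma exists_chart_of_finite {M : Matrix (Fin (n + 1)) (Fin (n + 1)) ℂ} {S : Set (PP n)}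
    (hS : S.Finite) (hSM : S ⊆ rationalNormalCurve M) :
    ∃ c : ℂ, ∀ P ∈ S, ∃ a t : ℂ, P.rep = a • M *ᵥ veron n ![t, 1 + c * t] := by
  have : Finite S := hS
  choose v hv b _ hrep using fun P : S => hSM P.2
  obtain ⟨c, hc⟩ := exists_forall_ne_mul hv
  refine ⟨c, fun P hP => ?_⟩
  obtain ⟨a, t, hat⟩ := exists_veron_eq_smul (n := n) (hc ⟨P, hP⟩)
  exact ⟨b ⟨P, hP⟩ * a, t, by rw [hrep ⟨P, hP⟩, hat, mulVec_smul, smul_smul]⟩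

/-! ### The parametrization of maximally intersected configurations -/

/-- The columns of `M * (rectVandermonde …)ᵀ` are the points with parameters `[t l : 1 + c * t l]`
on the rational normal curve with coefficient matrix `M`; multiplication by `G` changes the basis of
the subspace they span. The base ring is arbitrary so that `secantPoly` is an instance. -/
def secantMatrix {R : Type*} [CommRing R] {k m : ℕ} (M : Matrix (Fin k) (Fin k) R) (c : R)
    (t : Fin m → R) (G : Matrix (Fin m) (Fin m) R) : Matrix (Fin k) (Fin m) R :=
  M * (rectVandermonde t (fun l => 1 + c * t l) k)ᵀ * G

lemma secantMatrix_map {R S : Type*} [CommRing R] [CommRing S] (f : R →+* S) {k m : ℕ}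
    (M : Matrix (Fin k) (Fin k) R) (c : R) (t : Fin m → R) (G : Matrix (Fin m) (Fin m) R) :
    (secantMatrix M c t G).map f = secantMatrix (M.map f) (f c) (f ∘ t) (G.map f) := by
  simp only [secantMatrix, Matrix.map_mul, transpose_map, rectVandermonde_map, Function.comp_def,
    map_add, map_one, map_mul]

lemma exists_eq_secantMatrix_of_injective {m : ℕ} (hm : m ≤ n + 1)
    {M : Matrix (Fin (n + 1)) (Fin (n + 1)) ℂ} (hM : IsUnit M.det)
    {A : Matrix (Fin (n + 1)) (Fin m) ℂ} {c : ℂ} {P : Fin m → PP n} (hP : Function.Injective P)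
    (hPA : ∀ l, P l ∈ projSet A)
    (hPM : ∀ l, ∃ a t : ℂ, (P l).rep = a • M *ᵥ veron n ![t, 1 + c * t]) :
    ∃ t G, A = secantMatrix M c t G := by
  choose a t hrep using hPM
  refine ⟨t, exists_eq_mul_of_col_mem_span (B := M * _) ?_ fun l => ?_⟩
  · have hvander : LinearIndependent ℂ
        (rectVandermonde t (fun l => 1 + c * t l) (n + 1)).row := by
      refine linearIndependent_row_rectVandermonde (fun l => ?_) (fun l l' hne heq => ?_)
        (by simpa using hm)
      · by_contra! h
        simp [h.1] at h
      · have ht : t l = t l' := by linear_combination heq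
        exact hne (hP (eq_of_rep_eq_smul (hrep l) (ht ▸ hrep l')))
    exact hvander.map' M.mulVecLin <| LinearMap.ker_eq_bot.2 <|
      mulVec_injective_of_isUnit ((isUnit_iff_isUnit_det M).2 hM)
  · have ha : a l ≠ 0 := by
      intro ha
      exact (P l).rep_nonzero (by rw [hrep, ha, zero_smul])
    have hmem : (P l).rep ∈ Submodule.span ℂ (Set.range A.col) := hPA l
    rw [hrep, Submodule.smul_mem_iff _ ha,
      ← row_rectVandermonde t fun l => 1 + c * t l] at hmem
    exact hmem

lemma MaxIntersects.exists_eq_secantMatrix {M : Matrix (Fin (n + 1)) (Fin (n + 1)) ℂ}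
    (hM : IsUnit M.det) {A : Config n L} (h : MaxIntersects (rationalNormalCurve M) A) :
    ∃ c : ℂ, ∀ i j, ∃ t G, A i j = secantMatrix M c t G := by
  have hfin (i j) : (rationalNormalCurve M ∩ projSet (A i j)).Finite :=
    Set.finite_of_ncard_ne_zero (by rw [h i j]; omega)
  obtain ⟨c, hc⟩ := exists_chart_of_finite
    (Set.finite_iUnion fun i => Set.finite_iUnion fun j => hfin i j)
    (Set.iUnion₂_subset fun i j => Set.inter_subset_left)
  refine ⟨c, fun i j => ?_⟩
  have : Finite ↥(rationalNormalCurve M ∩ projSet (A i j)) := hfin i j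
  let e := Finite.equivFinOfCardEq (h i j)
  exact exists_eq_secantMatrix_of_injective (by omega) hM
    (Subtype.val_injective.comp e.symm.injective) (fun l => (e.symm l).2.2)
    fun l => hc _ (Set.mem_iUnion₂.2 ⟨i, j, (e.symm l).2⟩)

/-- The parameters of a maximally intersected configuration: the coefficient matrix of the curve,
the constant `c` of the chart `t ↦ [t : 1 + c t]`, and for each component the parameters of its
intersection points together with a square matrix. -/
abbrev ParamIndex (n : ℕ) (L : Fin (n - 1) → ℕ) :=
  (Fin (n + 1) × Fin (n + 1)) ⊕ Unit ⊕
    ((i : Fin (n - 1)) × (Fin (L i) × (Fin (i.1 + 1) ⊕ (Fin (i.1 + 1) × Fin (i.1 + 1)))))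

/-- The matrix entries of a maximally intersected configuration as polynomials in its
parameters. -/
def secantPoly (p : EntryIndex n L) : MvPolynomial (ParamIndex n L) ℂ :=
  secantMatrix (of fun r s => .X (.inl (r, s))) (.X (.inr (.inl ())))
    (fun l => .X (.inr (.inr ⟨p.1, p.2.1, .inl l⟩)))
    (of fun k l => .X (.inr (.inr ⟨p.1, p.2.1, .inr (k, l)⟩))) p.2.2.1 p.2.2.2

lemma eval_secantPoly (x : ParamIndex n L → ℂ) (p : EntryIndex n L) :
    MvPolynomial.eval x (secantPoly p) =
      secantMatrix (of fun r s => x (.inl (r, s))) (x (.inr (.inl ())))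
        (fun l => x (.inr (.inr ⟨p.1, p.2.1, .inl l⟩)))
        (of fun k l => x (.inr (.inr ⟨p.1, p.2.1, .inr (k, l)⟩))) p.2.2.1 p.2.2.2 := by
  rw [secantPoly, ← Matrix.map_apply (f := MvPolynomial.eval x), secantMatrix_map]
  simp [Function.comp_def, Matrix.map]

lemma exists_entries_eq_eval_secantPoly {A : Config n L} {C : Set (PP n)} (hC : IsRNC n C)
    (hCA : MaxIntersects C A) :
    ∃ x : ParamIndex n L → ℂ, A.entries = fun p => MvPolynomial.eval x (secantPoly p) := by
  obtain ⟨M, hM, rfl⟩ := hC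
  obtain ⟨c, hc⟩ := MaxIntersects.exists_eq_secantMatrix hM hCA
  choose t G hA using hc
  refine ⟨Sum.elim (fun q => M q.1 q.2) (Sum.elim (fun _ => c) fun q =>
    Sum.elim (t q.1 q.2.1) (fun g => G q.1 q.2.1 g.1 g.2) q.2.2), ?_⟩
  ext ⟨i, j, r, k⟩
  rw [eval_secantPoly, Config.entries, hA]
  rfl

/-! ### The dimension count -/

lemma Feasible.card_entryIndex_le (hL : Feasible n L) :
    Fintype.card (EntryIndex n L) ≤ Fintype.card (ParamIndex n L) :=
  hL.card_le_of_entries_mem_range secantPoly fun _ ⟨_, hC, hCA⟩ =>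
    exists_entries_eq_eval_secantPoly hC hCA

lemma Feasible.sum_le (hL : Feasible n L) : ∑ i, L i ≤ (n + 1) ^ 2 + 1 := by
  have hcard := hL.card_entryIndex_le
  simp only [Fintype.card_sigma, Fintype.card_prod, Fintype.card_sum, Fintype.card_fin,
    Fintype.card_unit] at hcard
  have hcomponent (i : Fin (n - 1)) :
      L i + L i * (i + 1 + (i + 1) * (i + 1)) ≤ L i * ((n + 1) * (i + 1)) := by
    have hi : (i : ℕ) + 2 ≤ n := by omega
    calc L i + L i * (i + 1 + (i + 1) * (i + 1))
        = L i * (1 + (i + 1 + (i + 1) * (i + 1))) := by ring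
      _ ≤ L i * ((n + 1) * (i + 1)) := Nat.mul_le_mul_left _ (by nlinarith)
  have hsum := Finset.sum_le_sum fun i (_ : i ∈ Finset.univ) => hcomponent i
  rw [Finset.sum_add_distrib] at hsum
  linarith

/-- There are only finitely many feasible weight vectors in `ℙⁿ`. -/
theorem finitely_many_feasible (n : ℕ) (hn : 3 ≤ n) :
    {L : Fin (n - 1) → ℕ | Feasible n L}.Finite := by
  refine (Set.finite_Iic fun _ => (n + 1) ^ 2 + 1).subset fun L hL i => ?_
  calc L i ≤ ∑ k, L k := Finset.single_le_sum (fun _ _ => Nat.zero_le _) (Finset.mem_univ i)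
    _ ≤ (n + 1) ^ 2 + 1 := Feasible.sum_le hL

end
end
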